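/- arXiv:1903.08357 — 2 statements merged into one kernel-verified Lean document; each statement's English description precedes it below -/
import Mathlib

section
/- Let X, X', J be finite types, set I := X × X', and let (M_t, M_f) be a binary measurement on ℂ^X. Let E : Matrix I I ℂ → Matrix I I ℂ be linear, map positive semidefinite matrices to positive semidefinite matrices, and be trace-preserving. Define R_t(ρ) := (M_t ⊗ 1_{X'}) * ρ * (M_t ⊗ 1_{X'})ᴴ and R_f(ρ) := (M_f ⊗ 1_{X'}) * ρ * (M_f ⊗ 1_{X'})ᴴ. Assume that for every positive semidefinite ρ : Matrix I I ℂ the family n ↦ R_f((E ∘ R_t)^[n] ρ) is summable and Matrix.trace (∑' n, R_f((E ∘ R_t)^[n] ρ)) = Matrix.trace ρ (the loop is terminating); define W(ρ) := ∑' n, R_f((E ∘ R_t)^[n] ρ). Let A, B be expectations on I × J, write M_{t,1} := (M_t ⊗ 1_{X'}) ⊗ 1_J and M_{f,1} := (M_f ⊗ 1_{X'}) ⊗ 1_J, and set C := M_{t,1}ᴴ * A * M_{t,1} + M_{f,1}ᴴ * B * M_{f,1}. If qRHL(A, E, id, C) holds, then qRHL(C, W, id, B) holds. [Rule While1] -/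
open Matrix Kronecker ComplexOrder

noncomputable section

/-- Partial trace over the second factor: `tr₂(ρ) i i' = ∑ j, ρ (i,j) (i',j)`. -/
def trB {I J : Type*} [Fintype J] (ρ : Matrix (I × J) (I × J) ℂ) : Matrix I I ℂ :=
  Matrix.of fun i i' => ∑ j, ρ (i, j) (i', j)

/-- Partial trace over the first factor: `tr₁(ρ) j j' = ∑ i, ρ (i,j) (i,j')`. -/
def trA {I J : Type*} [Fintype I] (ρ : Matrix (I × J) (I × J) ℂ) : Matrix J J ℂ :=
  Matrix.of fun j j' => ∑ i, ρ (i, j) (i, j')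

/-- `ρ` is separable iff it is a finite sum of Kronecker products of
positive semidefinite matrices. -/
def Separable {I J : Type*} [Fintype I] [Fintype J]
    (ρ : Matrix (I × J) (I × J) ℂ) : Prop :=
  ∃ (n : ℕ) (σ : Fin n → Matrix I I ℂ) (τ : Fin n → Matrix J J ℂ),
    (∀ k, (σ k).PosSemidef) ∧ (∀ k, (τ k).PosSemidef) ∧ ρ = ∑ k, σ k ⊗ₖ τ k

/-- The expectation-qRHL judgment `qRHL(A, E1, E2, B)`. -/
def qRHL {I J : Type*} [Fintype I] [Fintype J]
    (A : Matrix (I × J) (I × J) ℂ)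
    (E1 : Matrix I I ℂ → Matrix I I ℂ) (E2 : Matrix J J ℂ → Matrix J J ℂ)
    (B : Matrix (I × J) (I × J) ℂ) : Prop :=
  ∀ ρ : Matrix (I × J) (I × J) ℂ, ρ.PosSemidef → Separable ρ →
    ∃ ρ' : Matrix (I × J) (I × J) ℂ, ρ'.PosSemidef ∧ Separable ρ' ∧
      trB ρ' = E1 (trB ρ) ∧ trA ρ' = E2 (trA ρ) ∧
      (Matrix.trace (A * ρ)).re ≤ (Matrix.trace (B * ρ')).re

/-- Normalised pure product states. -/
def pureProd (I J : Type*) [Fintype I] [Fintype J] : Set (Matrix (I × J) (I × J) ℂ) :=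
  (fun p : EuclideanSpace ℂ I × EuclideanSpace ℂ J =>
    vecMulVec (fun i => p.1 i) (star fun i => p.1 i) ⊗ₖ
      vecMulVec (fun i => p.2 i) (star fun i => p.2 i)) ''
    (Metric.sphere 0 1 ×ˢ Metric.sphere 0 1)

theorem isCompact_pureProd (I J : Type*) [Fintype I] [Fintype J] :
    IsCompact (pureProd I J) := by
  apply IsCompact.image ((isCompact_sphere _ _).prod (isCompact_sphere _ _))
  refine continuous_matrix fun i j => ?_
  simp only [kroneckerMap_apply, vecMulVec_apply, Pi.star_apply]
  fun_prop

/-- Caratheodory: convex hull of a compact set is compact. -/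
theorem isCompact_convexHull_aux {V : Type*} [AddCommGroup V] [Module ℝ V] [TopologicalSpace V]
    [IsTopologicalAddGroup V] [ContinuousSMul ℝ V] [FiniteDimensional ℝ V]
    {K : Set V} (hK : IsCompact K) : IsCompact (convexHull ℝ K) := by
  classical
  rcases K.eq_empty_or_nonempty with rfl | ⟨k0, hk0⟩
  · simp
  let D := Module.finrank ℝ V + 1
  have key : convexHull ℝ K = (fun p : (Fin D → ℝ) × (Fin D → V) => ∑ i, p.1 i • p.2 i) ''
      (stdSimplex ℝ (Fin D) ×ˢ Set.pi Set.univ (fun _ => K)) := by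
    ext x
    constructor
    · intro hx
      obtain ⟨ι, _, z, w, hz, hind, hw, hw1, hx⟩ := eq_pos_convex_span_of_mem_convexHull hx
      have hcard : Fintype.card ι ≤ Fintype.card (Fin D) := by
        rw [Fintype.card_fin]
        exact hind.card_le_finrank_succ.trans
          (Nat.succ_le_succ (Submodule.finrank_le _))
      obtain ⟨e⟩ := Function.Embedding.nonempty_of_card_le hcard
      have hnot : ∀ i, i ∉ Set.range e → Function.extend e w (fun _ => (0:ℝ)) i = 0 := by
        intro i hi
        exact Function.extend_apply' _ _ _ hi
      refine ⟨(Function.extend e w (fun _ => 0), Function.extend e z (fun _ => k0)),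
        ⟨⟨?_, ?_⟩, ?_⟩, ?_⟩
      · intro i
        by_cases hi : i ∈ Set.range e
        · obtain ⟨j, rfl⟩ := hi
          simp only [e.injective.extend_apply]
          exact (hw j).le
        · exact (hnot i hi).ge
      · change ∑ i, Function.extend e w (fun _ => (0:ℝ)) i = 1
        rw [← Fintype.sum_of_injective e e.injective w _ hnot ?_]
        · exact hw1
        · intro i; exact (e.injective.extend_apply _ _ _).symm
      · intro i _
        by_cases hi : i ∈ Set.range e
        · obtain ⟨j, rfl⟩ := hi
          simp only [e.injective.extend_apply]
          exact hz ⟨j, rfl⟩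
        · simp only [Function.extend_apply' _ _ _ hi]
          exact hk0
      · rw [← hx]
        symm
        apply Fintype.sum_of_injective e e.injective
        · intro i hi
          simp only [hnot i hi, zero_smul]
        · intro i
          simp only [e.injective.extend_apply]
    · rintro ⟨⟨w, z⟩, ⟨⟨hw, hw1⟩, hz⟩, rfl⟩
      exact (convex_convexHull ℝ K).sum_mem (fun i _ => hw i) hw1
        (fun i _ => subset_convexHull ℝ K (hz i trivial))
  rw [key]
  apply ((isCompact_stdSimplex ℝ (Fin D)).prod (isCompact_univ_pi fun _ => hK)).image
  fun_prop

section sepfacts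
variable {I J : Type*} [Fintype I] [Fintype J]

theorem Separable.zero : Separable (0 : Matrix (I × J) (I × J) ℂ) :=
  ⟨0, fun _ => 0, fun _ => 0, fun k => k.elim0, fun k => k.elim0, by simp⟩

theorem Separable.add {ρ ρ' : Matrix (I × J) (I × J) ℂ} (h : Separable ρ) (h' : Separable ρ') :
    Separable (ρ + ρ') := by
  obtain ⟨n, σ, τ, hσ, hτ, rfl⟩ := h
  obtain ⟨n', σ', τ', hσ', hτ', rfl⟩ := h'
  refine ⟨n + n', Fin.append σ σ', Fin.append τ τ', ?_, ?_, ?_⟩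
  · intro k
    refine Fin.addCases (fun i => ?_) (fun i => ?_) k <;> simp [hσ, hσ']
  · intro k
    refine Fin.addCases (fun i => ?_) (fun i => ?_) k <;> simp [hτ, hτ']
  · simp [Fin.sum_univ_add]

theorem Separable.kron {σ : Matrix I I ℂ} {τ : Matrix J J ℂ} (hσ : σ.PosSemidef)
    (hτ : τ.PosSemidef) : Separable (σ ⊗ₖ τ) :=
  ⟨1, fun _ => σ, fun _ => τ, fun _ => hσ, fun _ => hτ, by simp⟩

theorem Separable.smul {ρ : Matrix (I × J) (I × J) ℂ} (h : Separable ρ) {t : ℝ} (ht : 0 ≤ t) :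
    Separable (t • ρ) := by
  obtain ⟨n, σ, τ, hσ, hτ, rfl⟩ := h
  refine ⟨n, fun k => t • σ k, τ, fun k => (hσ k).smul ht, hτ, ?_⟩
  simp [Finset.smul_sum, smul_kronecker]

theorem Separable.posSemidef {ρ : Matrix (I × J) (I × J) ℂ} (h : Separable ρ) :
    ρ.PosSemidef := by
  classical
  obtain ⟨n, σ, τ, hσ, hτ, rfl⟩ := h
  exact posSemidef_sum _ fun k _ => (hσ k).kronecker (hτ k)

theorem Separable.sum {ρ : ℕ → Matrix (I × J) (I × J) ℂ} (h : ∀ n, Separable (ρ n)) (N : ℕ) :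
    Separable (∑ n ∈ Finset.range N, ρ n) := by
  induction N with
  | zero => simpa using Separable.zero
  | succ N ih => rw [Finset.sum_range_succ]; exact ih.add (h N)

theorem Separable.induct {P : Matrix (I × J) (I × J) ℂ → Prop} (h0 : P 0)
    (hadd : ∀ a b, P a → P b → P (a + b))
    (hk : ∀ (σ : Matrix I I ℂ) (τ : Matrix J J ℂ), σ.PosSemidef → τ.PosSemidef → P (σ ⊗ₖ τ))
    {ρ : Matrix (I × J) (I × J) ℂ} (h : Separable ρ) : P ρ := by
  obtain ⟨n, σ, τ, hσ, hτ, rfl⟩ := h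
  exact Finset.sum_induction _ P hadd h0 fun k _ => hk _ _ (hσ k) (hτ k)

theorem trace_unit {L : Type*} [Fintype L] (v : EuclideanSpace ℂ L)
    (hv : v ∈ Metric.sphere 0 1) :
    trace (vecMulVec (fun i => v i) (star fun i => v i)) = 1 := by
  have h1 : ‖v‖ ^ 2 = 1 := by simp at hv; simp [hv]
  rw [EuclideanSpace.norm_sq_eq] at h1
  simp only [trace, diag_apply, vecMulVec_apply, Pi.star_apply, RCLike.star_def,
    Complex.mul_conj, Complex.normSq_eq_norm_sq]
  exact_mod_cast h1

theorem trace_hull {κ : Matrix (I × J) (I × J) ℂ} (hκ : κ ∈ convexHull ℝ (pureProd I J)) :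
    Separable κ ∧ (trace κ).re = 1 := by
  have hc : Convex ℝ {κ : Matrix (I × J) (I × J) ℂ | Separable κ ∧ (trace κ).re = 1} := by
    rintro a ⟨ha, ha'⟩ b ⟨hb, hb'⟩ s t hs ht hst
    refine ⟨(ha.smul hs).add (hb.smul ht), ?_⟩
    simp [ha', hb', hst]
  refine convexHull_min ?_ hc hκ
  rintro _ ⟨⟨v, w⟩, ⟨hv, hw⟩, rfl⟩
  refine ⟨Separable.kron (posSemidef_vecMulVec_self_star _) (posSemidef_vecMulVec_self_star _), ?_⟩
  simp only [trace_kronecker, trace_unit v hv, trace_unit w hw]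
  simp

theorem vec_norm {L : Type*} [Fintype L] [Nonempty L] (v : L → ℂ) :
    ∃ t : ℝ, 0 ≤ t ∧ ∃ u : EuclideanSpace ℂ L, u ∈ Metric.sphere 0 1 ∧
      vecMulVec v (star v) = t • vecMulVec (fun i => u i) (star fun i => u i) := by
  classical
  let x : EuclideanSpace ℂ L := WithLp.toLp 2 v
  by_cases hx : x = 0
  · refine ⟨0, le_rfl, EuclideanSpace.single (Classical.arbitrary L) 1, by simp, ?_⟩
    have : v = 0 := by
      funext i
      exact congrArg (fun y : EuclideanSpace ℂ L => y i) hx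
    simp [this]
  · have hn : ‖x‖ ≠ 0 := norm_ne_zero_iff.mpr hx
    refine ⟨‖x‖ ^ 2, by positivity, ((‖x‖⁻¹ : ℝ) : ℂ) • x, ?_, ?_⟩
    · simp [norm_smul, hn]
    · ext i j
      simp only [vecMulVec_apply, Matrix.smul_apply, Pi.star_apply, PiLp.smul_apply, smul_eq_mul,
        star_mul', Complex.real_smul, RCLike.star_def, Complex.conj_ofReal, x]
      have : ((‖x‖ : ℝ) : ℂ) ≠ 0 := by exact_mod_cast hn
      push_cast
      simp only [x] at this
      field_simp

theorem Separable.exists_hull [Nonempty I] [Nonempty J] {ρ : Matrix (I × J) (I × J) ℂ}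
    (h : Separable ρ) : ∃ t : ℝ, 0 ≤ t ∧ ∃ κ ∈ convexHull ℝ (pureProd I J), ρ = t • κ := by
  classical
  have h0 : ∃ t : ℝ, 0 ≤ t ∧ ∃ κ ∈ convexHull ℝ (pureProd I J),
      (0 : Matrix (I × J) (I × J) ℂ) = t • κ := by
    obtain ⟨_, _, u, hu, _⟩ := vec_norm (0 : I → ℂ)
    obtain ⟨_, _, w, hw, _⟩ := vec_norm (0 : J → ℂ)
    exact ⟨0, le_rfl, _, subset_convexHull ℝ _ ⟨(u, w), ⟨hu, hw⟩, rfl⟩, by simp⟩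
  have hadd : ∀ a b : Matrix (I × J) (I × J) ℂ,
      (∃ t : ℝ, 0 ≤ t ∧ ∃ κ ∈ convexHull ℝ (pureProd I J), a = t • κ) →
      (∃ t : ℝ, 0 ≤ t ∧ ∃ κ ∈ convexHull ℝ (pureProd I J), b = t • κ) →
      (∃ t : ℝ, 0 ≤ t ∧ ∃ κ ∈ convexHull ℝ (pureProd I J), a + b = t • κ) := by
    rintro _ _ ⟨s, hs, κ, hκ, rfl⟩ ⟨t, ht, l, hl, rfl⟩
    rcases (add_nonneg hs ht).eq_or_lt with h | h
    · have hs0 : s = 0 := by linarith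
      have ht0 : t = 0 := by linarith
      exact ⟨0, le_rfl, κ, hκ, by simp [hs0, ht0]⟩
    · refine ⟨s + t, h.le, (s / (s + t)) • κ + (t / (s + t)) • l, ?_, ?_⟩
      · exact convex_convexHull ℝ _ hκ hl (by positivity) (by positivity) (by field_simp)
      · rw [smul_add, smul_smul, smul_smul, mul_div_cancel₀ _ h.ne', mul_div_cancel₀ _ h.ne']
  refine h.induct h0 hadd ?_
  intro σ τ hσ hτ
  obtain ⟨m, v, rfl⟩ := posSemidef_iff_eq_sum_vecMulVec.mp hσ
  obtain ⟨m', w, rfl⟩ := posSemidef_iff_eq_sum_vecMulVec.mp hτ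
  have e : (∑ i, vecMulVec (v i) (star (v i))) ⊗ₖ (∑ i, vecMulVec (w i) (star (w i)))
      = ∑ i, ∑ j, vecMulVec (v i) (star (v i)) ⊗ₖ vecMulVec (w j) (star (w j)) := by
    ext a b
    simp only [kroneckerMap_apply, Matrix.sum_apply, Finset.sum_mul_sum]
  rw [e]
  refine Finset.sum_induction _ _ hadd h0 fun i _ => Finset.sum_induction _ _ hadd h0 fun j _ => ?_
  obtain ⟨s, hs, u, hu, hu'⟩ := vec_norm (v i)
  obtain ⟨t, ht, x, hx, hx'⟩ := vec_norm (w j)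
  refine ⟨s * t, by positivity, _, subset_convexHull ℝ _ ⟨(u, x), ⟨hu, hx⟩, rfl⟩, ?_⟩
  rw [hu', hx', smul_kronecker, kronecker_smul, smul_smul]

theorem Separable.of_tendsto {s : ℕ → Matrix (I × J) (I × J) ℂ} {ρ : Matrix (I × J) (I × J) ℂ}
    (hs : ∀ n, Separable (s n)) (hlim : Filter.Tendsto s Filter.atTop (nhds ρ)) :
    Separable ρ := by
  rcases isEmpty_or_nonempty (I × J) with he | he
  · rw [Subsingleton.elim ρ 0]
    exact Separable.zero
  obtain ⟨h1, h2⟩ := nonempty_prod.mp he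
  choose t ht κ hκ hst using fun n => (hs n).exists_hull
  have htr : ∀ n, t n = (trace (s n)).re := by
    intro n
    rw [hst n]
    simp [(trace_hull (hκ n)).2]
  have htc : Continuous fun M : Matrix (I × J) (I × J) ℂ => (trace M).re :=
    Complex.continuous_re.comp (Continuous.matrix_trace continuous_id)
  have htl : Filter.Tendsto t Filter.atTop (nhds (trace ρ).re) := by
    rw [funext htr]
    exact (htc.tendsto ρ).comp hlim
  haveI : FirstCountableTopology (Matrix (I × J) (I × J) ℂ) :=
    inferInstanceAs (FirstCountableTopology (I × J → I × J → ℂ))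
  obtain ⟨k, hk, φ, hφ, hkl⟩ :=
    (isCompact_convexHull_aux (isCompact_pureProd I J)).tendsto_subseq hκ
  have h3 : Filter.Tendsto (fun n => t (φ n) • κ (φ n)) Filter.atTop
      (nhds ((trace ρ).re • k)) := (htl.comp hφ.tendsto_atTop).smul hkl
  have h4 : Filter.Tendsto (fun n => t (φ n) • κ (φ n)) Filter.atTop (nhds ρ) := by
    simp only [← hst]
    exact hlim.comp hφ.tendsto_atTop
  rw [tendsto_nhds_unique h4 h3]
  exact (trace_hull hk).1.smul (ge_of_tendsto' htl ht)

theorem separable_bound (I J : Type*) [Fintype I] [Fintype J] (a b : I × J) :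
    ∃ M : ℝ, ∀ ρ : Matrix (I × J) (I × J) ℂ, Separable ρ → ‖ρ a b‖ ≤ M * (trace ρ).re := by
  haveI : Nonempty I := ⟨a.1⟩
  haveI : Nonempty J := ⟨a.2⟩
  have hcont : Continuous fun M : Matrix (I × J) (I × J) ℂ => ‖M a b‖ := by fun_prop
  obtain ⟨M, hM⟩ := ((isCompact_convexHull_aux (isCompact_pureProd I J)).image hcont).bddAbove
  refine ⟨M, fun ρ hρ => ?_⟩
  obtain ⟨t, ht, κ, hκ, rfl⟩ := hρ.exists_hull
  have h1 : ‖κ a b‖ ≤ M := hM ⟨κ, hκ, rfl⟩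
  have h2 := (trace_hull hκ).2
  have e1 : ‖(t • κ) a b‖ = t * ‖κ a b‖ := by
    rw [Matrix.smul_apply, norm_smul, Real.norm_of_nonneg ht]
  have e2 : (trace (t • κ)).re = t := by simp [h2]
  rw [e1, e2, mul_comm]
  exact mul_le_mul_of_nonneg_right h1 ht

theorem tendsto_zero_of_trace {s : ℕ → Matrix (I × J) (I × J) ℂ} (hs : ∀ n, Separable (s n))
    (ht : Filter.Tendsto (fun n => (trace (s n)).re) Filter.atTop (nhds 0)) :
    Filter.Tendsto s Filter.atTop (nhds 0) := by
  refine tendsto_pi_nhds.mpr fun a => tendsto_pi_nhds.mpr fun b => ?_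
  obtain ⟨M, hM⟩ := separable_bound I J a b
  refine squeeze_zero_norm (fun n => hM _ (hs n)) ?_
  simpa using ht.const_mul M

theorem summable_of_trace {s : ℕ → Matrix (I × J) (I × J) ℂ} (hs : ∀ n, Separable (s n))
    (ht : Summable (fun n => (trace (s n)).re)) : Summable s := by
  refine Pi.summable.mpr fun a => Pi.summable.mpr fun b => ?_
  obtain ⟨M, hM⟩ := separable_bound I J a b
  exact Summable.of_norm_bounded (ht.mul_left M) (fun n => hM _ (hs n))

theorem trB_add (a b : Matrix (I × J) (I × J) ℂ) : trB (a + b) = trB a + trB b := by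
  ext i j; simp [trB, Finset.sum_add_distrib]

theorem trA_add (a b : Matrix (I × J) (I × J) ℂ) : trA (a + b) = trA a + trA b := by
  ext i j; simp [trA, Finset.sum_add_distrib]

theorem trB_zero : trB (0 : Matrix (I × J) (I × J) ℂ) = 0 := by
  ext i j; simp [trB]

theorem trA_zero : trA (0 : Matrix (I × J) (I × J) ℂ) = 0 := by
  ext i j; simp [trA]

theorem trB_kron (σ : Matrix I I ℂ) (τ : Matrix J J ℂ) : trB (σ ⊗ₖ τ) = trace τ • σ := by
  ext i j; simp [trB, trace, ← Finset.mul_sum, mul_comm]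

theorem trA_kron (σ : Matrix I I ℂ) (τ : Matrix J J ℂ) : trA (σ ⊗ₖ τ) = trace σ • τ := by
  ext i j; simp [trA, trace, ← Finset.sum_mul]

theorem trace_trB (a : Matrix (I × J) (I × J) ℂ) : trace (trB a) = trace a := by
  simp [trB, trace, Fintype.sum_prod_type]

theorem trace_trA (a : Matrix (I × J) (I × J) ℂ) : trace (trA a) = trace a := by
  simp only [trA, trace, diag_apply, of_apply, Fintype.sum_prod_type]
  exact Finset.sum_comm

theorem continuous_trB : Continuous (trB : Matrix (I × J) (I × J) ℂ → Matrix I I ℂ) := by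
  refine continuous_matrix fun i j => ?_
  simp only [trB, of_apply]
  fun_prop

theorem continuous_trA : Continuous (trA : Matrix (I × J) (I × J) ℂ → Matrix J J ℂ) := by
  refine continuous_matrix fun i j => ?_
  simp only [trA, of_apply]
  fun_prop

theorem kron_conj [DecidableEq J] (M : Matrix I I ℂ) (σ : Matrix I I ℂ) (τ : Matrix J J ℂ) :
    (M ⊗ₖ (1 : Matrix J J ℂ)) * (σ ⊗ₖ τ) * (M ⊗ₖ (1 : Matrix J J ℂ))ᴴ
      = (M * σ * Mᴴ) ⊗ₖ τ := by
  simp [conjTranspose_kronecker, ← mul_kronecker_mul]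

theorem Separable.conj [DecidableEq J] (M : Matrix I I ℂ) {ρ : Matrix (I × J) (I × J) ℂ}
    (h : Separable ρ) :
    Separable ((M ⊗ₖ (1 : Matrix J J ℂ)) * ρ * (M ⊗ₖ (1 : Matrix J J ℂ))ᴴ) := by
  refine h.induct (P := fun ρ => Separable ((M ⊗ₖ (1 : Matrix J J ℂ)) * ρ *
    (M ⊗ₖ (1 : Matrix J J ℂ))ᴴ)) (by simpa using Separable.zero) ?_ ?_
  · intro a b ha hb
    rw [mul_add, add_mul]
    exact ha.add hb
  · intro σ τ hσ hτ
    rw [kron_conj]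
    exact .kron (hσ.mul_mul_conjTranspose_same M) hτ

theorem trB_conj [DecidableEq J] (M : Matrix I I ℂ) {ρ : Matrix (I × J) (I × J) ℂ}
    (h : Separable ρ) :
    trB ((M ⊗ₖ (1 : Matrix J J ℂ)) * ρ * (M ⊗ₖ (1 : Matrix J J ℂ))ᴴ) = M * trB ρ * Mᴴ := by
  refine h.induct (P := fun ρ => trB ((M ⊗ₖ (1 : Matrix J J ℂ)) * ρ *
    (M ⊗ₖ (1 : Matrix J J ℂ))ᴴ) = M * trB ρ * Mᴴ) (by simp [trB_zero]) ?_ ?_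
  · intro a b ha hb
    rw [mul_add, add_mul, trB_add, ha, hb, trB_add, mul_add, add_mul]
  · intro σ τ hσ hτ
    simp [kron_conj, trB_kron]

theorem trA_conj [DecidableEq I] [DecidableEq J] (M N : Matrix I I ℂ)
    (hMN : Mᴴ * M + Nᴴ * N = 1) {ρ : Matrix (I × J) (I × J) ℂ} (h : Separable ρ) :
    trA ((M ⊗ₖ (1 : Matrix J J ℂ)) * ρ * (M ⊗ₖ (1 : Matrix J J ℂ))ᴴ) +
      trA ((N ⊗ₖ (1 : Matrix J J ℂ)) * ρ * (N ⊗ₖ (1 : Matrix J J ℂ))ᴴ) = trA ρ := by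
  refine h.induct (P := fun ρ => trA ((M ⊗ₖ (1 : Matrix J J ℂ)) * ρ *
      (M ⊗ₖ (1 : Matrix J J ℂ))ᴴ) +
      trA ((N ⊗ₖ (1 : Matrix J J ℂ)) * ρ * (N ⊗ₖ (1 : Matrix J J ℂ))ᴴ) = trA ρ)
      (by simp [trA_zero]) ?_ ?_
  · intro a b ha hb
    simp only [mul_add, add_mul, trA_add]
    rw [← ha, ← hb]
    abel
  · intro σ τ hσ hτ
    rw [kron_conj, kron_conj, trA_kron, trA_kron, trA_kron, ← add_smul, trace_mul_cycle,
      trace_mul_cycle N, ← trace_add, ← add_mul, hMN, one_mul]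

end sepfacts

/-- Rule While1: a while loop on the left against `skip` on the right. -/
theorem qRHL_while1 {X X' J : Type*} [Fintype X] [Fintype X'] [Fintype J]
    [DecidableEq X] [DecidableEq X'] [DecidableEq J]
    (Mt Mf : Matrix X X ℂ) (hM : Mtᴴ * Mt + Mfᴴ * Mf = 1)
    (E : Matrix (X × X') (X × X') ℂ →ₗ[ℂ] Matrix (X × X') (X × X') ℂ)
    (hEpos : ∀ ρ : Matrix (X × X') (X × X') ℂ, ρ.PosSemidef → (E ρ).PosSemidef)
    (hEtr : ∀ ρ : Matrix (X × X') (X × X') ℂ, Matrix.trace (E ρ) = Matrix.trace ρ)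
    -- the one-step operations of the loop
    (Rt Rf : Matrix (X × X') (X × X') ℂ → Matrix (X × X') (X × X') ℂ)
    (hRt : Rt = fun ρ => (Mt ⊗ₖ (1 : Matrix X' X' ℂ)) * ρ * (Mt ⊗ₖ (1 : Matrix X' X' ℂ))ᴴ)
    (hRf : Rf = fun ρ => (Mf ⊗ₖ (1 : Matrix X' X' ℂ)) * ρ * (Mf ⊗ₖ (1 : Matrix X' X' ℂ))ᴴ)
    -- termination of the while loop
    (hterm : ∀ ρ : Matrix (X × X') (X × X') ℂ, ρ.PosSemidef →
      Summable (fun n : ℕ => Rf ((⇑E ∘ Rt)^[n] ρ)) ∧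
      Matrix.trace (∑' n : ℕ, Rf ((⇑E ∘ Rt)^[n] ρ)) = Matrix.trace ρ)
    (A B : Matrix ((X × X') × J) ((X × X') × J) ℂ)
    (hA : A.PosSemidef) (hB : B.PosSemidef)
    (C : Matrix ((X × X') × J) ((X × X') × J) ℂ)
    (hC : C = ((Mt ⊗ₖ (1 : Matrix X' X' ℂ)) ⊗ₖ (1 : Matrix J J ℂ))ᴴ * A *
          ((Mt ⊗ₖ (1 : Matrix X' X' ℂ)) ⊗ₖ (1 : Matrix J J ℂ)) +
        ((Mf ⊗ₖ (1 : Matrix X' X' ℂ)) ⊗ₖ (1 : Matrix J J ℂ))ᴴ * B *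
          ((Mf ⊗ₖ (1 : Matrix X' X' ℂ)) ⊗ₖ (1 : Matrix J J ℂ)))
    (h : qRHL A E id C) :
    qRHL C (fun ρ => ∑' n : ℕ, Rf ((⇑E ∘ Rt)^[n] ρ)) id B := by
  classical
  intro ρ _ hρ
  set T : Matrix (X × X') (X × X') ℂ := Mt ⊗ₖ (1 : Matrix X' X' ℂ) with hT
  set F : Matrix (X × X') (X × X') ℂ := Mf ⊗ₖ (1 : Matrix X' X' ℂ) with hF
  have hTF : Tᴴ * T + Fᴴ * F = 1 := by
    rw [hT, hF, conjTranspose_kronecker, conjTranspose_kronecker, ← mul_kronecker_mul,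
      ← mul_kronecker_mul, conjTranspose_one, one_mul, ← add_kronecker, hM, one_kronecker_one]
  let ct : Matrix ((X × X') × J) ((X × X') × J) ℂ → Matrix ((X × X') × J) ((X × X') × J) ℂ :=
    fun r => (T ⊗ₖ (1 : Matrix J J ℂ)) * r * (T ⊗ₖ (1 : Matrix J J ℂ))ᴴ
  let cf : Matrix ((X × X') × J) ((X × X') × J) ℂ → Matrix ((X × X') × J) ((X × X') × J) ℂ :=
    fun r => (F ⊗ₖ (1 : Matrix J J ℂ)) * r * (F ⊗ₖ (1 : Matrix J J ℂ))ᴴ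
  have hCtr : ∀ r, trace (C * r) = trace (A * ct r) + trace (B * cf r) := by
    intro r
    simp only [hC, ct, cf, add_mul, trace_add]
    congr 1
    · simp only [Matrix.mul_assoc]
      rw [trace_mul_comm]
      simp only [Matrix.mul_assoc]
    · simp only [Matrix.mul_assoc]
      rw [trace_mul_comm]
      simp only [Matrix.mul_assoc]
  have step : ∀ r : {r : Matrix ((X × X') × J) ((X × X') × J) ℂ // Separable r},
      ∃ r' : {r : Matrix ((X × X') × J) ((X × X') × J) ℂ // Separable r},
        trB r'.1 = E (trB (ct r.1)) ∧ trA r'.1 = trA (ct r.1) ∧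
        (trace (A * ct r.1)).re ≤ (trace (C * r'.1)).re := by
    intro r
    obtain ⟨r', _, h2, h3, h4, h5⟩ := h (ct r.1) (r.2.conj T).posSemidef (r.2.conj T)
    exact ⟨⟨r', h2⟩, h3, h4, h5⟩
  choose f hfB hfA hfle using step
  let s : ℕ → {r : Matrix ((X × X') × J) ((X × X') × J) ℂ // Separable r} :=
    fun n => f^[n] ⟨ρ, hρ⟩
  have hs0 : (s 0).1 = ρ := rfl
  have hsS : ∀ n, s (n + 1) = f (s n) := fun n => Function.iterate_succ_apply' f n _
  let φ : ℕ → Matrix ((X × X') × J) ((X × X') × J) ℂ := fun n => cf (s n).1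
  have hφ : ∀ n, Separable (φ n) := fun n => (s n).2.conj F
  have hsB : ∀ n, trB (s n).1 = (⇑E ∘ Rt)^[n] (trB ρ) := by
    intro n
    induction n with
    | zero => rfl
    | succ n ih =>
      rw [Function.iterate_succ_apply', ← ih, hsS, hfB]
      simp only [Function.comp_apply, hRt, ct]
      rw [trB_conj T (s n).2]
  have hφB : ∀ n, trB (φ n) = Rf ((⇑E ∘ Rt)^[n] (trB ρ)) := by
    intro n
    rw [← hsB, hRf]
    exact trB_conj F (s n).2
  have hρB : (trB ρ).PosSemidef := by
    refine hρ.induct (P := fun r => (trB r).PosSemidef) (by rw [trB_zero]; exact .zero) ?_ ?_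
    · intro a b ha hb
      rw [trB_add]; exact ha.add hb
    · intro σ τ hσ hτ
      rw [trB_kron]; exact hσ.smul hτ.trace_nonneg
  obtain ⟨hsum, htr⟩ := hterm _ hρB
  -- traces
  have htrsum : HasSum (fun n => (trace (φ n)).re) (trace ρ).re := by
    have h1 := hsum.hasSum.map (Complex.reAddGroupHom.comp (traceAddMonoidHom (X × X') ℂ))
      (Complex.continuous_re.comp (Continuous.matrix_trace continuous_id))
    have h2 : (Complex.reAddGroupHom.comp (traceAddMonoidHom (X × X') ℂ))
        (∑' n : ℕ, Rf ((⇑E ∘ Rt)^[n] (trB ρ))) = (trace ρ).re := by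
      rw [← trace_trB ρ, ← htr]; rfl
    rw [h2] at h1
    convert h1 using 1
    funext n
    rw [← trace_trB (φ n), hφB]; rfl
  have hstepA : ∀ n, trA (s n).1 = trA (s (n + 1)).1 + trA (φ n) := by
    intro n
    rw [hsS, hfA]
    exact (trA_conj T F hTF (s n).2).symm
  have hAN : ∀ N, trA ρ = trA (s N).1 + trA (∑ n ∈ Finset.range N, φ n) := by
    intro N
    induction N with
    | zero => simp [trA_zero, hs0]
    | succ N ih =>
      rw [ih, hstepA N, Finset.sum_range_succ, trA_add]; abel
  have htrN : ∀ N, (trace (s N).1).re = (trace ρ).re - ∑ n ∈ Finset.range N, (trace (φ n)).re := by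
    intro N
    have h1 := congrArg (fun M => (trace M).re) (hAN N)
    simp only [trace_add, trace_trA, Complex.add_re, trace_sum, Complex.re_sum] at h1
    linarith
  have hs_lim : Filter.Tendsto (fun n => (s n).1) Filter.atTop (nhds 0) := by
    apply tendsto_zero_of_trace (fun n => (s n).2)
    simp only [htrN]
    simpa using htrsum.tendsto_sum_nat.const_sub (trace ρ).re
  have hφsum : Summable φ := summable_of_trace hφ htrsum.summable
  have hpart := hφsum.hasSum.tendsto_sum_nat
  have hsep : Separable (∑' n, φ n) := Separable.of_tendsto (Separable.sum hφ) hpart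
  refine ⟨∑' n, φ n, hsep.posSemidef, hsep, ?_, ?_, ?_⟩
  · have h1 := hφsum.hasSum.map
      (AddMonoidHom.mk' (trB : Matrix ((X × X') × J) ((X × X') × J) ℂ → _) trB_add) continuous_trB
    have h2 : HasSum (fun n => trB (φ n)) (trB (∑' n, φ n)) := h1
    simp only [hφB] at h2
    exact h2.tsum_eq.symm
  · have h1 := (continuous_trA.tendsto _).comp hpart
    have h2 := (continuous_trA.tendsto _).comp hs_lim
    have h3 := h2.add h1
    rw [trA_zero, zero_add] at h3
    refine tendsto_nhds_unique h3 ?_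
    refine tendsto_const_nhds.congr fun N => ?_
    exact hAN N
  · have hle : ∀ N, (trace (C * ρ)).re ≤ (trace (C * (s N).1)).re +
        (trace (B * ∑ n ∈ Finset.range N, φ n)).re := by
      intro N
      induction N with
      | zero => simp [hs0]
      | succ N ih =>
        have h1 := hfle (s N)
        rw [← hsS] at h1
        have h2 := congrArg Complex.re (hCtr (s N).1)
        rw [Complex.add_re] at h2
        rw [Finset.sum_range_succ, mul_add, trace_add, Complex.add_re]
        change _ ≤ _ + (_ + (trace (B * cf (s N).1)).re)
        linarith
    have hc : ∀ D : Matrix ((X × X') × J) ((X × X') × J) ℂ,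
        Continuous fun M : Matrix ((X × X') × J) ((X × X') × J) ℂ => (trace (D * M)).re := by
      intro D
      exact Complex.continuous_re.comp
        (Continuous.matrix_trace (continuous_const.matrix_mul continuous_id))
    have h1 := (((hc C).tendsto _).comp hs_lim).add (((hc B).tendsto _).comp hpart)
    have h2 := ge_of_tendsto' h1 hle
    simpa using h2
end
end

section
/- Let X, X', Y, Y' be finite types, set I := X × X' and J := Y × Y', let (M_t, M_f) be a binary measurement on ℂ^X and (N_t, N_f) a binary measurement on ℂ^Y. For each t ∈ {true, false} let E_t : Matrix I I ℂ → Matrix I I ℂ and F_t : Matrix J J ℂ → Matrix J J ℂ be linear maps that map positive semidefinite matrices to positive semidefinite matrices and are trace-preserving. Let A_true, A_false, B be expectations on I × J. Write M_{t,1} := (M_t ⊗ 1_{X'}) ⊗ 1_J and N_{u,2} := 1_I ⊗ (N_u ⊗ 1_{Y'}), and set R*_{t,u}(A) := M_{t,1}ᴴ * N_{u,2}ᴴ * A * N_{u,2} * M_{t,1}. Define 𝐄(ρ) := E_true((M_t ⊗ 1_{X'}) * ρ * (M_t ⊗ 1_{X'})ᴴ) + E_false((M_f ⊗ 1_{X'})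 * ρ * (M_f ⊗ 1_{X'})ᴴ) and 𝐅(σ) := F_true((N_t ⊗ 1_{Y'}) * σ * (N_t ⊗ 1_{Y'})ᴴ) + F_false((N_f ⊗ 1_{Y'}) * σ * (N_f ⊗ 1_{Y'})ᴴ). If qRHL(A_true, E_true, F_true, B) and qRHL(A_false, E_false, F_false, B) hold, then qRHL(R*_{true,true}(A_true) + R*_{false,false}(A_false), 𝐄, 𝐅, B) holds. [Rule JointIf] -/
open Matrix Kronecker ComplexOrder

noncomputable section

namespace JI

variable {I J : Type*} [Fintype I] [Fintype J]

lemma trB_add (a b : Matrix (I × J) (I × J) ℂ) : trB (a + b) = trB a + trB b := by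
  ext i i'; simp [trB, Finset.sum_add_distrib]

lemma trA_add (a b : Matrix (I × J) (I × J) ℂ) : trA (a + b) = trA a + trA b := by
  ext i i'; simp [trA, Finset.sum_add_distrib]

lemma trB_sum {n : ℕ} (σ : Fin n → Matrix I I ℂ) (τ : Fin n → Matrix J J ℂ) :
    trB (∑ k, σ k ⊗ₖ τ k) = ∑ k, (τ k).trace • σ k := by
  ext i i'
  simp only [trB, Matrix.of_apply, Matrix.sum_apply, Matrix.kroneckerMap_apply, Matrix.smul_apply,
    Matrix.trace, Matrix.diag, smul_eq_mul]
  rw [Finset.sum_comm]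
  refine Finset.sum_congr rfl fun k _ => ?_
  rw [Finset.sum_mul]
  exact Finset.sum_congr rfl fun j _ => mul_comm _ _

lemma trA_sum {n : ℕ} (σ : Fin n → Matrix I I ℂ) (τ : Fin n → Matrix J J ℂ) :
    trA (∑ k, σ k ⊗ₖ τ k) = ∑ k, (σ k).trace • τ k := by
  ext i i'
  simp only [trA, Matrix.of_apply, Matrix.sum_apply, Matrix.kroneckerMap_apply, Matrix.smul_apply,
    Matrix.trace, Matrix.diag, smul_eq_mul]
  rw [Finset.sum_comm]
  refine Finset.sum_congr rfl fun k _ => ?_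
  rw [Finset.sum_mul]

lemma Sep.psd {ρ : Matrix (I × J) (I × J) ℂ} (h : Separable ρ) : ρ.PosSemidef := by
  obtain ⟨n, σ, τ, h1, h2, rfl⟩ := h
  exact Matrix.posSemidef_sum _ fun k _ => (h1 k).kronecker (h2 k)

lemma Sep.add {a b : Matrix (I × J) (I × J) ℂ} (ha : Separable a) (hb : Separable b) :
    Separable (a + b) := by
  obtain ⟨n, σ, τ, h1, h2, rfl⟩ := ha
  obtain ⟨m, σ', τ', h1', h2', rfl⟩ := hb
  refine ⟨n + m, Fin.append σ σ', Fin.append τ τ', ?_, ?_, ?_⟩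
  · intro k
    refine Fin.addCases (fun i => ?_) (fun i => ?_) k
    · simpa using h1 i
    · simpa using h1' i
  · intro k
    refine Fin.addCases (fun i => ?_) (fun i => ?_) k
    · simpa using h2 i
    · simpa using h2' i
  · simp [Fin.sum_univ_add]

open scoped MatrixOrder Matrix.Norms.L2Operator in
lemma trace_mul_nonneg {K : Type*} [Fintype K] {B ρ : Matrix K K ℂ}
    (hB : B.PosSemidef) (hρ : ρ.PosSemidef) : 0 ≤ (Matrix.trace (B * ρ)).re := by
  classical
  obtain ⟨C, rfl⟩ := CStarAlgebra.nonneg_iff_eq_star_mul_self.mp hB.nonneg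
  rw [Matrix.mul_assoc, Matrix.trace_mul_comm, Matrix.star_eq_conjTranspose]
  exact (Complex.le_def.mp (hρ.mul_mul_conjTranspose_same C).trace_nonneg).1

lemma trace_compl {K : Type*} [Fintype K] [DecidableEq K] {P Q τ : Matrix K K ℂ}
    (h : Pᴴ * P + Qᴴ * Q = 1) :
    (P * τ * Pᴴ).trace + (Q * τ * Qᴴ).trace = τ.trace := by
  rw [Matrix.trace_mul_comm, Matrix.trace_mul_comm (Q * τ), ← Matrix.mul_assoc,
    ← Matrix.mul_assoc, ← Matrix.trace_add, ← Matrix.add_mul, h, Matrix.one_mul]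

lemma trace_eq [DecidableEq I] [DecidableEq J] (P : Matrix I I ℂ) (Q : Matrix J J ℂ)
    (A : Matrix (I × J) (I × J) ℂ) {n : ℕ} (σ : Fin n → Matrix I I ℂ)
    (τ : Fin n → Matrix J J ℂ) :
    ((P ⊗ₖ (1 : Matrix J J ℂ))ᴴ * ((1 : Matrix I I ℂ) ⊗ₖ Q)ᴴ * A * ((1 : Matrix I I ℂ) ⊗ₖ Q) *
      (P ⊗ₖ (1 : Matrix J J ℂ)) * ∑ k, σ k ⊗ₖ τ k).trace =
    (A * ∑ k, (P * σ k * Pᴴ) ⊗ₖ (Q * τ k * Qᴴ)).trace := by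
  have e1 : (P ⊗ₖ (1 : Matrix J J ℂ))ᴴ * ((1 : Matrix I I ℂ) ⊗ₖ Q)ᴴ = Pᴴ ⊗ₖ Qᴴ := by
    rw [conjTranspose_kronecker, conjTranspose_kronecker, ← mul_kronecker_mul]; simp
  have e2 : ((1 : Matrix I I ℂ) ⊗ₖ Q) * (P ⊗ₖ (1 : Matrix J J ℂ)) = P ⊗ₖ Q := by
    rw [← mul_kronecker_mul]; simp
  rw [e1, Matrix.mul_assoc (_ * A), e2, Matrix.mul_assoc (_ * A), Matrix.mul_assoc,
    Matrix.trace_mul_comm, Matrix.mul_assoc, Finset.mul_sum, Finset.sum_mul]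
  simp only [mul_kronecker_mul]

theorem main [DecidableEq I] [DecidableEq J]
    (P : Bool → Matrix I I ℂ) (Q : Bool → Matrix J J ℂ)
    (hP : (P true)ᴴ * P true + (P false)ᴴ * P false = 1)
    (hQ : (Q true)ᴴ * Q true + (Q false)ᴴ * Q false = 1)
    (E : Bool → (Matrix I I ℂ →ₗ[ℂ] Matrix I I ℂ))
    (F : Bool → (Matrix J J ℂ →ₗ[ℂ] Matrix J J ℂ))
    (hEpos : ∀ t (ρ : Matrix I I ℂ), ρ.PosSemidef → (E t ρ).PosSemidef)
    (hEtr : ∀ t (ρ : Matrix I I ℂ), Matrix.trace (E t ρ) = Matrix.trace ρ)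
    (hFpos : ∀ u (σ : Matrix J J ℂ), σ.PosSemidef → (F u σ).PosSemidef)
    (hFtr : ∀ u (σ : Matrix J J ℂ), Matrix.trace (F u σ) = Matrix.trace σ)
    (AT AF B : Matrix (I × J) (I × J) ℂ) (hB : B.PosSemidef)
    (hT : qRHL AT (E true) (F true) B) (hF : qRHL AF (E false) (F false) B) :
    qRHL
      ((P true ⊗ₖ (1 : Matrix J J ℂ))ᴴ * ((1 : Matrix I I ℂ) ⊗ₖ Q true)ᴴ * AT *
          ((1 : Matrix I I ℂ) ⊗ₖ Q true) * (P true ⊗ₖ (1 : Matrix J J ℂ)) +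
        (P false ⊗ₖ (1 : Matrix J J ℂ))ᴴ * ((1 : Matrix I I ℂ) ⊗ₖ Q false)ᴴ * AF *
          ((1 : Matrix I I ℂ) ⊗ₖ Q false) * (P false ⊗ₖ (1 : Matrix J J ℂ)))
      (fun ρ => E true (P true * ρ * (P true)ᴴ) + E false (P false * ρ * (P false)ᴴ))
      (fun σ => F true (Q true * σ * (Q true)ᴴ) + F false (Q false * σ * (Q false)ᴴ))
      B := by
  rintro ρ - ⟨n, σ, τ, hσ, hτ, rfl⟩
  have hs : ∀ t k, (P t * σ k * (P t)ᴴ).PosSemidef := fun t k =>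
    (hσ k).mul_mul_conjTranspose_same _
  have ht : ∀ t k, (Q t * τ k * (Q t)ᴴ).PosSemidef := fun t k =>
    (hτ k).mul_mul_conjTranspose_same _
  have hsep : ∀ t, Separable (∑ k, (P t * σ k * (P t)ᴴ) ⊗ₖ (Q t * τ k * (Q t)ᴴ)) :=
    fun t => ⟨n, _, _, hs t, ht t, rfl⟩
  obtain ⟨ρT, -, sT, bT, aT, iT⟩ := hT _ (Sep.psd (hsep true)) (hsep true)
  obtain ⟨ρF, -, sF, bF, aF, iF⟩ := hF _ (Sep.psd (hsep false)) (hsep false)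
  have hoff : ∀ t u, Separable (∑ k, (E t (P t * σ k * (P t)ᴴ)) ⊗ₖ (F u (Q u * τ k * (Q u)ᴴ))) :=
    fun t u => ⟨n, _, _, fun k => hEpos _ _ (hs t k), fun k => hFpos _ _ (ht u k), rfl⟩
  have hall := Sep.add (Sep.add sT sF) (Sep.add (hoff true false) (hoff false true))
  refine ⟨_, Sep.psd hall, hall, ?_, ?_, ?_⟩
  · simp only [trB_add, bT, bF, trB_sum, hFtr, map_sum, map_smul, Finset.mul_sum, Finset.sum_mul,
      Matrix.mul_smul, Matrix.smul_mul]
    simp only [← Finset.sum_add_distrib]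
    refine Finset.sum_congr rfl fun k _ => ?_
    rw [← trace_compl (τ := τ k) hQ]
    module
  · simp only [trA_add, aT, aF, trA_sum, hEtr, map_sum, map_smul, Finset.mul_sum, Finset.sum_mul,
      Matrix.mul_smul, Matrix.smul_mul]
    simp only [← Finset.sum_add_distrib]
    refine Finset.sum_congr rfl fun k _ => ?_
    rw [← trace_compl (τ := σ k) hP]
    module
  · have o1 := trace_mul_nonneg hB (Sep.psd (hoff true false))
    have o2 := trace_mul_nonneg hB (Sep.psd (hoff false true))
    rw [Matrix.add_mul, Matrix.trace_add, trace_eq, trace_eq]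
    simp only [Matrix.mul_add, Matrix.trace_add, Complex.add_re]
    linarith

lemma compl_ext {X X' : Type*} [Fintype X] [Fintype X'] [DecidableEq X] [DecidableEq X']
    {P Q : Matrix X X ℂ} (h : Pᴴ * P + Qᴴ * Q = 1) :
    (P ⊗ₖ (1 : Matrix X' X' ℂ))ᴴ * (P ⊗ₖ (1 : Matrix X' X' ℂ)) +
      (Q ⊗ₖ (1 : Matrix X' X' ℂ))ᴴ * (Q ⊗ₖ (1 : Matrix X' X' ℂ)) = 1 := by
  rw [conjTranspose_kronecker, conjTranspose_kronecker, ← mul_kronecker_mul, ← mul_kronecker_mul,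
    ← add_kronecker, h]
  simp

end JI

/-- Rule JointIf: simultaneous if-statements on both sides, diagonal branches. -/
theorem qRHL_jointIf {X X' Y Y' : Type*}
    [Fintype X] [Fintype X'] [Fintype Y] [Fintype Y']
    [DecidableEq X] [DecidableEq X'] [DecidableEq Y] [DecidableEq Y']
    (M : Bool → Matrix X X ℂ) (N : Bool → Matrix Y Y ℂ)
    (hM : (M true)ᴴ * M true + (M false)ᴴ * M false = 1)
    (hN : (N true)ᴴ * N true + (N false)ᴴ * N false = 1)
    (E : Bool → (Matrix (X × X') (X × X') ℂ →ₗ[ℂ] Matrix (X × X') (X × X') ℂ))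
    (F : Bool → (Matrix (Y × Y') (Y × Y') ℂ →ₗ[ℂ] Matrix (Y × Y') (Y × Y') ℂ))
    (hEpos : ∀ t (ρ : Matrix (X × X') (X × X') ℂ), ρ.PosSemidef → (E t ρ).PosSemidef)
    (hEtr : ∀ t (ρ : Matrix (X × X') (X × X') ℂ), Matrix.trace (E t ρ) = Matrix.trace ρ)
    (hFpos : ∀ u (σ : Matrix (Y × Y') (Y × Y') ℂ), σ.PosSemidef → (F u σ).PosSemidef)
    (hFtr : ∀ u (σ : Matrix (Y × Y') (Y × Y') ℂ), Matrix.trace (F u σ) = Matrix.trace σ)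
    (AT AF B : Matrix ((X × X') × (Y × Y')) ((X × X') × (Y × Y')) ℂ)
    (hAT : AT.PosSemidef) (hAF : AF.PosSemidef) (hB : B.PosSemidef)
    (hT : qRHL AT (E true) (F true) B) (hF : qRHL AF (E false) (F false) B) :
    qRHL
      (((M true ⊗ₖ (1 : Matrix X' X' ℂ)) ⊗ₖ (1 : Matrix (Y × Y') (Y × Y') ℂ))ᴴ *
          ((1 : Matrix (X × X') (X × X') ℂ) ⊗ₖ (N true ⊗ₖ (1 : Matrix Y' Y' ℂ)))ᴴ *
          AT *
          ((1 : Matrix (X × X') (X × X') ℂ) ⊗ₖ (N true ⊗ₖ (1 : Matrix Y' Y' ℂ))) *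
          ((M true ⊗ₖ (1 : Matrix X' X' ℂ)) ⊗ₖ (1 : Matrix (Y × Y') (Y × Y') ℂ)) +
        ((M false ⊗ₖ (1 : Matrix X' X' ℂ)) ⊗ₖ (1 : Matrix (Y × Y') (Y × Y') ℂ))ᴴ *
          ((1 : Matrix (X × X') (X × X') ℂ) ⊗ₖ (N false ⊗ₖ (1 : Matrix Y' Y' ℂ)))ᴴ *
          AF *
          ((1 : Matrix (X × X') (X × X') ℂ) ⊗ₖ (N false ⊗ₖ (1 : Matrix Y' Y' ℂ))) *
          ((M false ⊗ₖ (1 : Matrix X' X' ℂ)) ⊗ₖ (1 : Matrix (Y × Y') (Y × Y') ℂ)))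
      (fun ρ => E true ((M true ⊗ₖ (1 : Matrix X' X' ℂ)) * ρ *
            (M true ⊗ₖ (1 : Matrix X' X' ℂ))ᴴ) +
          E false ((M false ⊗ₖ (1 : Matrix X' X' ℂ)) * ρ *
            (M false ⊗ₖ (1 : Matrix X' X' ℂ))ᴴ))
      (fun σ => F true ((N true ⊗ₖ (1 : Matrix Y' Y' ℂ)) * σ *
            (N true ⊗ₖ (1 : Matrix Y' Y' ℂ))ᴴ) +
          F false ((N false ⊗ₖ (1 : Matrix Y' Y' ℂ)) * σ *
            (N false ⊗ₖ (1 : Matrix Y' Y' ℂ))ᴴ))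
      B := by
  exact JI.main (fun t => M t ⊗ₖ (1 : Matrix X' X' ℂ)) (fun t => N t ⊗ₖ (1 : Matrix Y' Y' ℂ))
    (JI.compl_ext hM) (JI.compl_ext hN) E F hEpos hEtr hFpos hFtr AT AF B hB hT hF
end
end
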